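/- Let L/K be a finite Galois extension of fields with Galois group G = Gal(L/K). The K-linear map φ : L ⊗_K L → L[G] determined by φ(x ⊗ y) = Σ_{σ ∈ G} σ(x)·y·σ^{-1} is an isomorphism of L-vector spaces (where L acts on L ⊗_K L through the second factor and on L[G] through the coefficients). -/

import Mathlib

open scoped TensorProduct

/-- The resolvent map as a `K`-linear map. -/
noncomputable def resolventAux (K L : Type*) [Field K] [Field L] [Algebra K L]
    [FiniteDimensional K L] : (L ⊗[K] L) →ₗ[K] MonoidAlgebra L (L ≃ₐ[K] L) :=
  TensorProduct.lift (LinearMap.mk₂ K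
    (fun x y : L => ∑ σ : L ≃ₐ[K] L, MonoidAlgebra.single σ⁻¹ (σ x * y))
    (by intro a b c; simp [add_mul, MonoidAlgebra.single_add, Finset.sum_add_distrib])
    (by intro a b c; simp [Finset.smul_sum, MonoidAlgebra.smul_single])
    (by intro a b c; simp [mul_add, MonoidAlgebra.single_add, Finset.sum_add_distrib])
    (by intro a b c; simp [Finset.smul_sum, MonoidAlgebra.smul_single]))

theorem resolventAux_tmul (K L : Type*) [Field K] [Field L] [Algebra K L]
    [FiniteDimensional K L] (x y : L) :
    resolventAux K L (x ⊗ₜ[K] y) =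
      ∑ σ : L ≃ₐ[K] L, MonoidAlgebra.single σ⁻¹ (σ x * y) := by
  simp [resolventAux]

theorem resolventAux_smul (K L : Type*) [Field K] [Field L] [Algebra K L]
    [FiniteDimensional K L] (c x y : L) :
    resolventAux K L (x ⊗ₜ[K] (c * y)) = c • resolventAux K L (x ⊗ₜ[K] y) := by
  simp only [resolventAux_tmul, Finset.smul_sum, MonoidAlgebra.smul_single, smul_eq_mul]
  refine Finset.sum_congr rfl fun σ _ => ?_
  congr 1; ring

theorem resolventAux_surjective (K L : Type*) [Field K] [Field L] [Algebra K L]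
    [FiniteDimensional K L] : Function.Surjective (resolventAux K L) := by
  have hli : LinearIndependent L (fun σ : L ≃ₐ[K] L => (σ : L → L)) :=
    (linearIndependent_monoidHom L L).comp (fun σ : L ≃ₐ[K] L => ((σ : L →ₐ[K] L) : L →* L))
      (fun f g h => by ext x; exact DFunLike.congr_fun h x)
  -- the range as an `L`-subspace
  let W : Submodule L (MonoidAlgebra L (L ≃ₐ[K] L)) :=
    { carrier := Set.range (resolventAux K L)
      zero_mem' := ⟨0, map_zero _⟩
      add_mem' := by
        rintro _ _ ⟨a, rfl⟩ ⟨b, rfl⟩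
        exact ⟨a + b, map_add _ _ _⟩
      smul_mem' := by
        rintro c _ ⟨a, rfl⟩
        induction a with
        | zero => exact ⟨0, by simp⟩
        | tmul x y => exact ⟨x ⊗ₜ (c * y), resolventAux_smul K L c x y⟩
        | add a b ha hb =>
          obtain ⟨a', ha'⟩ := ha
          obtain ⟨b', hb'⟩ := hb
          exact ⟨a' + b', by rw [map_add, map_add, smul_add, ha', hb']⟩ }
  have hW : W = ⊤ := by
    by_contra hne
    obtain ⟨f, hf0, hf⟩ := Submodule.exists_le_ker_of_lt_top W (lt_top_iff_ne_top.mpr hne)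
    apply hf0
    have h1 : ∀ x : L, ∑ σ : L ≃ₐ[K] L, f (MonoidAlgebra.single σ⁻¹ 1) * σ x = 0 := by
      intro x
      have h2 : f (resolventAux K L (x ⊗ₜ 1)) = 0 := hf ⟨_, rfl⟩
      rw [resolventAux_tmul, map_sum] at h2
      rw [← h2]
      refine Finset.sum_congr rfl fun σ _ => ?_
      rw [mul_comm, ← smul_eq_mul, ← map_smul, MonoidAlgebra.smul_single, smul_eq_mul]
    have h3 := Fintype.linearIndependent_iff.mp hli
      (fun σ => f (MonoidAlgebra.single σ⁻¹ 1)) (by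
        funext x
        simpa using h1 x)
    have h4 : ∀ (σ : L ≃ₐ[K] L) (c : L), f (MonoidAlgebra.single σ c) = 0 := by
      intro σ c
      have h5 := h3 σ⁻¹
      simp only [inv_inv] at h5
      have : (MonoidAlgebra.single σ c : MonoidAlgebra L (L ≃ₐ[K] L)) =
          c • MonoidAlgebra.single σ 1 := by
        rw [MonoidAlgebra.smul_single, smul_eq_mul, mul_one]
      rw [this, map_smul, h5, smul_zero]
    ext a
    simp [h4]
  intro z
  have : z ∈ W := hW ▸ Submodule.mem_top
  exact this

/-- Let `L/K` be a finite Galois extension with Galois group `G = Gal(L/K)`.  The map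
`φ : L ⊗_K L → L[G]` determined by `φ (x ⊗ y) = ∑_{σ ∈ G} σ(x)·y·σ⁻¹` is an isomorphism
of `L`-vector spaces, where `L` acts on `L ⊗_K L` through the second factor and on the
group algebra `L[G]` through the coefficients (the second clause below records this
`L`-linearity; it is forced by the displayed formula). -/
theorem resolvent_map_isomorphism
    (K L : Type*) [Field K] [Field L] [Algebra K L] [FiniteDimensional K L] [IsGalois K L] :
    ∃ φ : (L ⊗[K] L) ≃ₗ[K] MonoidAlgebra L (L ≃ₐ[K] L),
      (∀ x y : L,
        φ (x ⊗ₜ[K] y) = ∑ σ : L ≃ₐ[K] L, MonoidAlgebra.single σ⁻¹ (σ x * y)) ∧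
      (∀ (c x y : L), φ (x ⊗ₜ[K] (c * y)) = c • φ (x ⊗ₜ[K] y)) := by
  let e : MonoidAlgebra L (L ≃ₐ[K] L) ≃ₗ[K] ((L ≃ₐ[K] L) →₀ L) :=
    MonoidAlgebra.coeffLinearEquiv K
  have : FiniteDimensional K (MonoidAlgebra L (L ≃ₐ[K] L)) := Module.Finite.equiv e.symm
  have hd : Module.finrank K (L ⊗[K] L) =
      Module.finrank K (MonoidAlgebra L (L ≃ₐ[K] L)) := by
    rw [e.finrank_eq, Module.finrank_tensorProduct,
      (Finsupp.linearEquivFunOnFinite K L (L ≃ₐ[K] L)).finrank_eq, Module.finrank_pi_fintype]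
    simp [← Nat.card_eq_fintype_card, IsGalois.card_aut_eq_finrank]
  have hs := resolventAux_surjective K L
  have hi := (LinearMap.injective_iff_surjective_of_finrank_eq_finrank hd).mpr hs
  exact ⟨LinearEquiv.ofBijective (resolventAux K L) ⟨hi, hs⟩,
    fun x y => resolventAux_tmul K L x y, fun c x y => resolventAux_smul K L c x y⟩
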